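/- Let 0 < r1 ≤ r2 ≤ r3, let n be an integer with 2 ≤ n ≤ 4, let c > 0, and let Ω be an isoperimetric region in T^3 × R^n with 0 < η_m < c. Then I_{S^1_{r1}×S^1_{r2}×R^{n+1}}(V^{n+3}(Ω)) − 2c < V^{n+2}(∂Ω). -/

import Mathlib

open MeasureTheory Real ENNReal NNReal

noncomputable section

/-- The flat circle of radius `r` (circumference `2πr`), i.e. `ℝ / (2πr)ℤ`
with the quotient (arc-length) metric. -/
abbrev Circ (r : ℝ) : Type := AddCircle (2 * Real.pi * r)

/-- `d`-dimensional Hausdorff (Riemannian) measure of a subset of a metric space. -/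
noncomputable def haus (X : Type*) [EMetricSpace X] (d : ℕ) (s : Set X) : ℝ≥0∞ :=
  letI : MeasurableSpace X := borel X
  haveI : BorelSpace X := ⟨rfl⟩
  (MeasureTheory.Measure.hausdorffMeasure (d : ℝ) : Measure X) s

/-- A closed region is the closure of an open set. -/
def IsClosedRegion {X : Type*} [TopologicalSpace X] (U : Set X) : Prop :=
  ∃ V : Set X, IsOpen V ∧ U = closure V

/-- The isoperimetric profile of an `m`-dimensional space `X`:
the infimum of the `(m-1)`-dimensional boundary measures of closed regions
of `m`-dimensional measure `v`. -/
noncomputable def isoProfile (X : Type*) [EMetricSpace X] (m : ℕ) (v : ℝ≥0∞) : ℝ≥0∞ :=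
  ⨅ (U : Set X) (_ : IsClosedRegion U ∧ haus X m U = v), haus X (m - 1) (frontier U)

/-- An isoperimetric region in the `m`-dimensional space `X`. -/
def IsIsoRegion (X : Type*) [EMetricSpace X] (m : ℕ) (Ω : Set X) : Prop :=
  IsClosedRegion Ω ∧ haus X (m - 1) (frontier Ω) = isoProfile X m (haus X m Ω)

/-- Euclidean `n`-space. -/
abbrev EucSp (n : ℕ) : Type := EuclideanSpace ℝ (Fin n)

/-- The Riemannian product `S¹_r × ℝ^m` (with the `ℓ²` product metric). -/
abbrev S1R (r : ℝ) (m : ℕ) : Type := WithLp 2 (Circ r × EucSp m)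

/-- The Riemannian product `S¹_{r1} × S¹_{r2} × ℝ^n = T² × ℝ^n`. -/
abbrev T2R (r1 r2 : ℝ) (n : ℕ) : Type := WithLp 2 (Circ r1 × S1R r2 n)

/-- first circle coordinate of a point of `T² × ℝ^n` -/
def t2fst {r1 r2 : ℝ} {n : ℕ} (p : T2R r1 r2 n) : Circ r1 :=
  (WithLp.equiv 2 (Circ r1 × S1R r2 n) p).1

/-- second circle coordinate of a point of `T² × ℝ^n` -/
def t2snd {r1 r2 : ℝ} {n : ℕ} (p : T2R r1 r2 n) : Circ r2 :=
  (WithLp.equiv 2 (Circ r2 × EucSp n) ((WithLp.equiv 2 (Circ r1 × S1R r2 n) p).2)).1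

/-- Euclidean coordinate of a point of `T² × ℝ^n` -/
def t2euc {r1 r2 : ℝ} {n : ℕ} (p : T2R r1 r2 n) : EucSp n :=
  (WithLp.equiv 2 (Circ r2 × EucSp n) ((WithLp.equiv 2 (Circ r1 × S1R r2 n) p).2)).2

/-- `ω_n`, the `n`-dimensional volume of the unit round sphere `Sⁿ ⊂ ℝ^{n+1}`. -/
noncomputable def omegaS (n : ℕ) : ℝ :=
  (haus (EucSp (n+1)) n (Metric.sphere (0 : EucSp (n+1)) 1)).toReal

/-- `β_n(r) = n^{(n-1)(n+1)} (2πr ω_{n-1})^{n+1} (1+n)^{-n²} ω_n^{-n}`. -/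
noncomputable def betaC (n : ℕ) (r : ℝ) : ℝ :=
  (n : ℝ) ^ ((n-1)*(n+1)) * (2 * Real.pi * r * omegaS (n-1)) ^ (n+1) *
    ((1 + (n : ℝ)) ^ (n^2))⁻¹ * ((omegaS n) ^ n)⁻¹

/-- The isoperimetric profile of `ℝ^m`: `I_{ℝ^m}(v) = m^{(m-1)/m} ω_{m-1}^{1/m} v^{(m-1)/m}`. -/
noncomputable def eucProfile (m : ℕ) (v : ℝ) : ℝ :=
  (m : ℝ) ^ (((m : ℝ) - 1)/m) * omegaS (m-1) ^ ((1 : ℝ)/m) * v ^ (((m : ℝ) - 1)/m)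

/-- The region `S¹_{r1} × S¹_{r2} × B^n_R` in `T² × ℝ^n`. -/
def tball (r1 r2 : ℝ) (n : ℕ) (R : ℝ) : Set (T2R r1 r2 n) :=
  {p | ‖t2euc p‖ ≤ R}

/-- `f_n(v) = V^{n+1}(∂(S¹_{r1} × S¹_{r2} × B^n_R))`, where `R > 0` is such that
`V^{n+2}(S¹_{r1} × S¹_{r2} × B^n_R) = v`. -/
noncomputable def fA (r1 r2 : ℝ) (n : ℕ) (v : ℝ≥0∞) : ℝ≥0∞ :=
  ⨅ (R : ℝ) (_ : 0 < R ∧ haus (T2R r1 r2 n) (n+2) (tball r1 r2 n R) = v),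
    haus (T2R r1 r2 n) (n+1) (frontier (tball r1 r2 n R))

/-- The slice function `F₁(t) = V^{n+1}(Ω ∩ ({t} × S¹_{r2} × ℝ^n))`. -/
noncomputable def sliceF1 {r1 r2 : ℝ} {n : ℕ} (Ω : Set (T2R r1 r2 n)) (t : Circ r1) : ℝ≥0∞ :=
  haus (T2R r1 r2 n) (n+1) (Ω ∩ {p | t2fst p = t})

/-- The slice function `F₂(s) = V^{n+1}(Ω ∩ (S¹_{r1} × {s} × ℝ^n))`. -/
noncomputable def sliceF2 {r1 r2 : ℝ} {n : ℕ} (Ω : Set (T2R r1 r2 n)) (s : Circ r2) : ℝ≥0∞ :=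
  haus (T2R r1 r2 n) (n+1) (Ω ∩ {p | t2snd p = s})

/-- `θ_m`, the minimum (infimum) of the slice function `F₁`. -/
noncomputable def thetaMin {r1 r2 : ℝ} {n : ℕ} (Ω : Set (T2R r1 r2 n)) : ℝ≥0∞ :=
  ⨅ t : Circ r1, sliceF1 Ω t

/-- `θ_M`, the maximum (supremum) of the slice function `F₁`. -/
noncomputable def thetaMax {r1 r2 : ℝ} {n : ℕ} (Ω : Set (T2R r1 r2 n)) : ℝ≥0∞ :=
  ⨆ t : Circ r1, sliceF1 Ω t

/-- `σ_m`, the minimum (infimum) of the slice function `F₂`. -/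
noncomputable def sigmaMin {r1 r2 : ℝ} {n : ℕ} (Ω : Set (T2R r1 r2 n)) : ℝ≥0∞ :=
  ⨅ s : Circ r2, sliceF2 Ω s

/-- `σ_M`, the maximum (supremum) of the slice function `F₂`. -/
noncomputable def sigmaMax {r1 r2 : ℝ} {n : ℕ} (Ω : Set (T2R r1 r2 n)) : ℝ≥0∞ :=
  ⨆ s : Circ r2, sliceF2 Ω s

/-- The region `S¹_r × B^m_R` in `S¹_r × ℝ^m`. -/
def s1ball (r : ℝ) (m : ℕ) (R : ℝ) : Set (S1R r m) :=
  {p | ‖(WithLp.equiv 2 (Circ r × EucSp m) p).2‖ ≤ R}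
/-- The Riemannian product `S¹_{r1} × S¹_{r2} × S¹_{r3} × ℝ^n = T³ × ℝ^n`. -/
abbrev T3R (r1 r2 r3 : ℝ) (n : ℕ) : Type :=
  WithLp 2 (Circ r1 × WithLp 2 (Circ r2 × S1R r3 n))

/-- third circle coordinate of a point of `T³ × ℝ^n` -/
def t3trd {r1 r2 r3 : ℝ} {n : ℕ} (p : T3R r1 r2 r3 n) : Circ r3 :=
  (WithLp.equiv 2 (Circ r3 × EucSp n)
    ((WithLp.equiv 2 (Circ r2 × S1R r3 n)
      ((WithLp.equiv 2 (Circ r1 × WithLp 2 (Circ r2 × S1R r3 n)) p).2)).2)).1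

/-- Euclidean coordinate of a point of `T³ × ℝ^n` -/
def t3euc {r1 r2 r3 : ℝ} {n : ℕ} (p : T3R r1 r2 r3 n) : EucSp n :=
  (WithLp.equiv 2 (Circ r3 × EucSp n)
    ((WithLp.equiv 2 (Circ r2 × S1R r3 n)
      ((WithLp.equiv 2 (Circ r1 × WithLp 2 (Circ r2 × S1R r3 n)) p).2)).2)).2

/-- The region `T³ × B^n_R` in `T³ × ℝ^n`. -/
def t3ball (r1 r2 r3 : ℝ) (n : ℕ) (R : ℝ) : Set (T3R r1 r2 r3 n) :=
  {p | ‖t3euc p‖ ≤ R}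

/-- `g_n(v) = V^{n+2}(∂(T³ × B^n_R))`, where `R > 0` is such that
`V^{n+3}(T³ × B^n_R) = v`. -/
noncomputable def gA (r1 r2 r3 : ℝ) (n : ℕ) (v : ℝ≥0∞) : ℝ≥0∞ :=
  ⨅ (R : ℝ) (_ : 0 < R ∧ haus (T3R r1 r2 r3 n) (n+3) (t3ball r1 r2 r3 n R) = v),
    haus (T3R r1 r2 r3 n) (n+2) (frontier (t3ball r1 r2 r3 n R))

/-- The slice function `F(t) = V^{n+2}(Ω ∩ (S¹_{r1} × S¹_{r2} × {t} × ℝ^n))`. -/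
noncomputable def sliceF3 {r1 r2 r3 : ℝ} {n : ℕ} (Ω : Set (T3R r1 r2 r3 n))
    (t : Circ r3) : ℝ≥0∞ :=
  haus (T3R r1 r2 r3 n) (n+2) (Ω ∩ {p | t3trd p = t})

/-- `η_m`, the minimum (infimum) of the slice function `F`. -/
noncomputable def etaMin {r1 r2 r3 : ℝ} {n : ℕ} (Ω : Set (T3R r1 r2 r3 n)) : ℝ≥0∞ :=
  ⨅ t : Circ r3, sliceF3 Ω t

/-- `η_M`, the maximum (supremum) of the slice function `F`. -/
noncomputable def etaMax {r1 r2 r3 : ℝ} {n : ℕ} (Ω : Set (T3R r1 r2 r3 n)) : ℝ≥0∞ :=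
  ⨆ t : Circ r3, sliceF3 Ω t

/-- `f : X → Y` unrolls the cut `T` of `Y` along the height function `h` with period `L`. -/
structure IsUnrolling {X Y : Type*} [EMetricSpace X] [EMetricSpace Y] (f : X → Y) (h : X → ℝ)
    (L : ℝ) (T : Set Y) : Prop where
  pos : 0 < L
  continuous_height : Continuous h
  edist_eq : ∀ x y, |h x - h y| ≤ L / 2 → edist (f x) (f y) = edist x y
  lift : ∀ x y, ∃ x', f x' = y ∧ |h x - h x'| ≤ L / 2
  map_zero : ∀ x, h x = 0 → f x ∈ T
  map_period : ∀ x, h x = L → f x ∈ T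
  map_mem_Ioo : ∀ x, 0 < h x → h x < L → f x ∉ T
  surj : ∀ y ∉ T, ∃ x, 0 < h x ∧ h x < L ∧ f x = y
  inj : ∀ x x', 0 < h x → h x < L → 0 < h x' → h x' < L → f x = f x' → x = x'

theorem hausdorffMeasure_image_of_edist_eq {X Y : Type*} [EMetricSpace X] [EMetricSpace Y]
    [MeasurableSpace X] [BorelSpace X] [MeasurableSpace Y] [BorelSpace Y] {f : X → Y} {A : Set X}
    (hf : ∀ x ∈ A, ∀ y ∈ A, edist (f x) (f y) = edist x y) {d : ℝ} (hd : 0 ≤ d) :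
    μH[d] (f '' A) = μH[d] A := by
  have h1 : Isometry (A.domRestrict f) := fun x y => hf x x.2 y y.2
  have h2 := h1.hausdorffMeasure_image (d := d) (Or.inl hd) Set.univ
  have h3 := (isometry_subtype_coe (s := A)).hausdorffMeasure_image (d := d) (Or.inl hd) Set.univ
  rw [Set.image_univ, Set.range_domRestrict] at h2
  rw [Set.image_univ, Subtype.range_coe] at h3
  rw [h2, h3]

namespace IsUnrolling

variable {X Y : Type*} [EMetricSpace X] [EMetricSpace Y] {f : X → Y} {h : X → ℝ} {L : ℝ}
  {T : Set Y}

theorem continuous (hf : IsUnrolling f h L T) : Continuous f := by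
  rw [continuous_iff_continuousAt]
  intro x
  have hL := hf.pos
  have hx : ∀ᶠ y in nhds x, |h y - h x| < L / 2 := by
    have := hf.continuous_height.tendsto x
    have h2 := Metric.tendsto_nhds.1 this (L / 2) (by linarith)
    simpa [Real.dist_eq] using h2
  rw [ContinuousAt, EMetric.tendsto_nhds]
  intro ε hε
  filter_upwards [hx, Metric.eball_mem_nhds x hε] with y hy hy2
  rw [hf.edist_eq y x hy.le]
  exact hy2

theorem isOpenMap (hf : IsUnrolling f h L T) : IsOpenMap f := by
  intro U hU
  rw [EMetric.isOpen_iff] at hU ⊢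
  rintro _ ⟨x, hx, rfl⟩
  obtain ⟨ε, hε, hb⟩ := hU x hx
  refine ⟨ε, hε, fun y hy => ?_⟩
  obtain ⟨x', rfl, hx'⟩ := hf.lift x y
  refine ⟨x', hb ?_, rfl⟩
  have := hf.edist_eq x x' hx'
  rw [Metric.mem_eball, edist_comm] at hy ⊢
  rwa [← this]

theorem isOpen_Ioo (hf : IsUnrolling f h L T) (a b : ℝ) : IsOpen {x | a < h x ∧ h x < b} :=
  (isOpen_Ioi.preimage hf.continuous_height).inter (isOpen_Iio.preimage hf.continuous_height)

theorem hausdorffMeasure_preimage [MeasurableSpace X] [BorelSpace X] [MeasurableSpace Y]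
    [BorelSpace Y] (hf : IsUnrolling f h L T) (B : Set Y) {d : ℝ} (hd : 0 ≤ d) :
    μH[d] (f ⁻¹' B ∩ {x | 0 < h x ∧ h x < L}) = μH[d] (B \ T) := by
  have hL := hf.pos
  set S := {x | 0 < h x ∧ h x < L} with hS
  set S2 := {x | L / 2 < h x ∧ h x < L} with hS2
  have hS2o : IsOpen S2 := hf.isOpen_Ioo _ _
  have hI : Set.InjOn f S := fun x hx y hy hxy => hf.inj x y hx.1 hx.2 hy.1 hy.2 hxy
  have hS2S : S2 ⊆ S := fun x hx => ⟨by have := hx.1; linarith, hx.2⟩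
  have himg : B \ T = f '' (f ⁻¹' B ∩ S) := by
    ext y
    constructor
    · rintro ⟨hy, hyT⟩
      obtain ⟨x, h0, h1, rfl⟩ := hf.surj y hyT
      exact ⟨x, ⟨hy, h0, h1⟩, rfl⟩
    · rintro ⟨x, ⟨hx, h0, h1⟩, rfl⟩
      exact ⟨hx, hf.map_mem_Ioo x h0 h1⟩
  have hsdiff : f '' (f ⁻¹' B ∩ S) \ f '' S2 = f '' ((f ⁻¹' B ∩ S) \ S2) := by
    ext y
    constructor
    · rintro ⟨⟨x, hx, rfl⟩, hy⟩
      exact ⟨x, ⟨hx, fun hx2 => hy ⟨x, hx2, rfl⟩⟩, rfl⟩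
    · rintro ⟨x, ⟨hx, hx2⟩, rfl⟩
      refine ⟨⟨x, hx, rfl⟩, ?_⟩
      rintro ⟨x', hx', hxx⟩
      exact hx2 (hI (hS2S hx') hx.2 hxx ▸ hx')
  rw [himg, ← measure_inter_add_sdiff (f ⁻¹' B ∩ S) hS2o.measurableSet,
    ← measure_inter_add_sdiff (f '' (f ⁻¹' B ∩ S)) (hf.isOpenMap S2 hS2o).measurableSet,
    ← hI.image_inter Set.inter_subset_right hS2S,
    hsdiff]
  congr 1
  · refine (hausdorffMeasure_image_of_edist_eq ?_ hd).symm
    rintro x ⟨-, hx1, hx2⟩ y ⟨-, hy1, hy2⟩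
    exact hf.edist_eq _ _ (abs_le.2 ⟨by linarith, by linarith⟩)
  · refine (hausdorffMeasure_image_of_edist_eq ?_ hd).symm
    have key : ∀ x ∈ (f ⁻¹' B ∩ S) \ S2, 0 < h x ∧ h x ≤ L / 2 := by
      rintro x ⟨⟨-, hx1, hx2⟩, hx3⟩
      refine ⟨hx1, ?_⟩
      by_contra hc
      exact hx3 ⟨not_le.1 hc, hx2⟩
    intro x hx y hy
    obtain ⟨hx1, hx2⟩ := key x hx
    obtain ⟨hy1, hy2⟩ := key y hy
    exact hf.edist_eq _ _ (abs_le.2 ⟨by linarith, by linarith⟩)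

theorem hausdorffMeasure_level_le [MeasurableSpace X] [BorelSpace X] [MeasurableSpace Y]
    [BorelSpace Y] (hf : IsUnrolling f h L T) (B : Set Y) {d : ℝ} (hd : 0 ≤ d) {a : ℝ} :
    μH[d] (f ⁻¹' B ∩ {x | h x = a}) ≤ μH[d] B := by
  have hL := hf.pos
  rw [← hausdorffMeasure_image_of_edist_eq (f := f) _ hd]
  · apply measure_mono
    rintro _ ⟨x, hx, rfl⟩
    exact hx.1
  · rintro x ⟨-, hx⟩ y ⟨-, hy⟩
    apply hf.edist_eq
    rw [hx.out, hy.out, sub_self, abs_zero]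
    linarith

/-- Cutting a closed region along `T` and unrolling it preserves its volume and adds at most twice
the measure of the cut to its boundary. -/
theorem exists_closedRegion [MeasurableSpace X] [BorelSpace X] [MeasurableSpace Y]
    [BorelSpace Y] (hf : IsUnrolling f h L T) {Ω : Set Y} (hΩ : IsClosedRegion Ω) {d e : ℝ}
    (hd : 0 ≤ d) (hde : d < e) (hT : μH[d] (Ω ∩ T) ≠ ⊤) :
    ∃ U : Set X, IsClosedRegion U ∧ μH[e] U = μH[e] Ω ∧
      μH[d] (frontier U) ≤ μH[d] (frontier Ω) + 2 * μH[d] (Ω ∩ T) := by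
  have hL := hf.pos
  obtain ⟨V, hV, rfl⟩ := hΩ
  set S := {x | 0 < h x ∧ h x < L} with hS
  have hSo : IsOpen S := hf.isOpen_Ioo _ _
  set U := closure (f ⁻¹' V ∩ S) with hU
  have hUf : U ⊆ f ⁻¹' closure V :=
    (closure_mono Set.inter_subset_left).trans (hf.continuous.closure_preimage_subset V)
  have hUS : U ∩ S = f ⁻¹' closure V ∩ S := by
    apply Set.Subset.antisymm
    · exact Set.inter_subset_inter_left _ hUf
    · rintro x ⟨hx, hxS⟩
      refine ⟨?_, hxS⟩
      have h1 := hf.isOpenMap.preimage_closure_subset_closure_preimage hx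
      have h2 := hSo.inter_closure ⟨hxS, h1⟩
      rwa [Set.inter_comm] at h2
  have hUd : U \ S ⊆ (f ⁻¹' (closure V ∩ T) ∩ {x | h x = 0}) ∪
      (f ⁻¹' (closure V ∩ T) ∩ {x | h x = L}) := by
    rintro x ⟨hx, hxS⟩
    have hc : U ⊆ {x | 0 ≤ h x ∧ h x ≤ L} :=
      closure_minimal (fun y hy => ⟨hy.2.1.le, hy.2.2.le⟩)
        ((isClosed_Ici.preimage hf.continuous_height).inter
          (isClosed_Iic.preimage hf.continuous_height))
    obtain ⟨h0, h1⟩ := hc hx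
    rcases h0.eq_or_lt with h0 | h0
    · exact Or.inl ⟨⟨hUf hx, hf.map_zero x h0.symm⟩, h0.symm⟩
    rcases h1.eq_or_lt with h1 | h1
    · exact Or.inr ⟨⟨hUf hx, hf.map_period x h1⟩, h1⟩
    exact absurd ⟨h0, h1⟩ hxS
  have hUdm : ∀ {a : ℝ}, 0 ≤ a → μH[a] (U \ S) ≤ 2 * μH[a] (closure V ∩ T) := fun ha =>
    ((measure_mono hUd).trans (measure_union_le _ _)).trans (by
      rw [two_mul]
      exact add_le_add (hf.hausdorffMeasure_level_le _ ha) (hf.hausdorffMeasure_level_le _ ha))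
  have hfr : frontier U ∩ S ⊆ f ⁻¹' frontier (closure V) ∩ S := by
    rintro x ⟨hx, hxS⟩
    refine ⟨⟨subset_closure (hUf (isClosed_closure.frontier_subset hx)), fun hxi => hx.2 ?_⟩, hxS⟩
    refine mem_interior.2 ⟨f ⁻¹' interior (closure V) ∩ S, ?_,
      (isOpen_interior.preimage hf.continuous).inter hSo, hxi, hxS⟩
    exact ((Set.inter_subset_inter_left _ (Set.preimage_mono interior_subset)).trans
      hUS.symm.subset).trans Set.inter_subset_left
  refine ⟨U, ⟨_, (hV.preimage hf.continuous).inter hSo, rfl⟩, ?_, ?_⟩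
  · have he : 0 ≤ e := hd.trans hde.le
    have hz : μH[e] (closure V ∩ T) = 0 :=
      (Measure.hausdorffMeasure_zero_or_top hde _).resolve_right hT
    have hz2 : μH[e] (U \ S) = 0 := by
      have := hUdm he
      rwa [hz, mul_zero, nonpos_iff_eq_zero] at this
    rw [← measure_inter_add_sdiff U hSo.measurableSet, hz2, add_zero, hUS,
      hf.hausdorffMeasure_preimage _ he]
    refine le_antisymm (measure_mono Set.sdiff_subset) ?_
    calc μH[e] (closure V) ≤ μH[e] (closure V ∩ T) + μH[e] (closure V \ T) :=
          measure_le_inter_add_sdiff _ _ _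
      _ = _ := by rw [hz, zero_add]
  · rw [← measure_inter_add_sdiff (frontier U) hSo.measurableSet]
    refine add_le_add ?_ ?_
    · refine (measure_mono hfr).trans ?_
      rw [hf.hausdorffMeasure_preimage _ hd]
      exact measure_mono Set.sdiff_subset
    · exact (measure_mono (Set.sdiff_subset_sdiff_left isClosed_closure.frontier_subset)).trans
        (hUdm hd)

end IsUnrolling

/-- If the sublevel sets of `q` have finite volume and its level sets finite area, then every
volume is realized by a closed region with finite boundary area. -/
theorem exists_closedRegion_of_level_finite {X : Type*} [EMetricSpace X] [MeasurableSpace X]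
    [BorelSpace X] {q : X → ℝ} (hq : Continuous q) (hq0 : ∀ x, 0 ≤ q x) {d e : ℝ}
    (hde : d < e) (hlev : ∀ R, μH[d] {x | q x = R} ≠ ⊤) (hsub : ∀ R, μH[e] {x | q x ≤ R} ≠ ⊤)
    {v : ℝ≥0∞} (hv : v ≤ μH[e] (Set.univ : Set X)) :
    ∃ U : Set X, IsClosedRegion U ∧ μH[e] U = v ∧ μH[d] (frontier U) ≠ ⊤ := by
  rcases hv.eq_or_lt with hv | hv
  · exact ⟨Set.univ, ⟨Set.univ, isOpen_univ, closure_univ.symm⟩, hv.symm, by simp⟩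
  have hnull : ∀ R, μH[e] {x | q x = R} = 0 := fun R =>
    (Measure.hausdorffMeasure_zero_or_top hde _).resolve_right (hlev R)
  have hG : ∀ R, μH[e] {x | q x ≤ R} = μH[e] {x | q x < R} := by
    intro R
    refine le_antisymm ?_ (measure_mono fun x (hx : q x < R) => hx.le)
    calc μH[e] {x | q x ≤ R} ≤ μH[e] ({x | q x < R} ∪ {x | q x = R}) :=
          measure_mono fun x (hx : q x ≤ R) => lt_or_eq_of_le hx
      _ ≤ _ := (measure_union_le _ _).trans (by rw [hnull, add_zero])
  set A := {R : ℝ | 0 ≤ R ∧ v ≤ μH[e] {x | q x ≤ R}} with hA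
  have hAne : A.Nonempty := by
    have hmono : Monotone fun k : ℕ => {x | q x ≤ (k : ℝ)} := fun a b hab x hx =>
      le_trans hx.out (by exact_mod_cast hab)
    have hU : (⋃ k : ℕ, {x | q x ≤ (k : ℝ)}) = Set.univ :=
      Set.eq_univ_of_forall fun x => Set.mem_iUnion.2 (exists_nat_ge (q x))
    rw [← hU, hmono.measure_iUnion, lt_iSup_iff] at hv
    obtain ⟨k, hk⟩ := hv
    exact ⟨k, by positivity, hk.le⟩
  have hAb : BddBelow A := ⟨0, fun R hR => hR.1⟩
  set R := sInf A with hR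
  have hge : v ≤ μH[e] {x | q x ≤ R} := by
    have hanti : Antitone fun k : ℕ => {x | q x ≤ R + 1 / ((k : ℝ) + 1)} := fun a b hab x hx =>
      le_trans hx.out (by gcongr)
    have hI : {x | q x ≤ R} = ⋂ k : ℕ, {x | q x ≤ R + 1 / ((k : ℝ) + 1)} := by
      ext x
      simp only [Set.mem_ofPred_eq, Set.mem_iInter]
      constructor
      · intro hx k
        have : (0 : ℝ) < 1 / ((k : ℝ) + 1) := by positivity
        linarith
      · intro hx
        refine le_of_forall_pos_le_add fun ε hε => ?_
        obtain ⟨k, hk⟩ := exists_nat_one_div_lt hε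
        exact (hx k).trans (by linarith)
    rw [hI, hanti.measure_iInter
      (fun k => (isClosed_Iic.preimage hq).measurableSet.nullMeasurableSet) ⟨0, hsub _⟩]
    refine le_iInf fun k => ?_
    have : R < R + 1 / ((k : ℝ) + 1) := by
      have : (0 : ℝ) < 1 / ((k : ℝ) + 1) := by positivity
      linarith
    obtain ⟨R', hR', hlt⟩ := exists_lt_of_csInf_lt hAne this
    exact hR'.2.trans (measure_mono fun x hx => le_trans hx.out hlt.le)
  have hle : μH[e] {x | q x < R} ≤ v := by
    have hmono : Monotone fun k : ℕ => {x | q x ≤ R - 1 / ((k : ℝ) + 1)} := fun a b hab x hx =>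
      le_trans hx.out (by gcongr)
    have hI : {x | q x < R} = ⋃ k : ℕ, {x | q x ≤ R - 1 / ((k : ℝ) + 1)} := by
      ext x
      simp only [Set.mem_ofPred_eq, Set.mem_iUnion]
      constructor
      · intro hx
        obtain ⟨k, hk⟩ := exists_nat_one_div_lt (sub_pos.2 hx)
        exact ⟨k, by linarith⟩
      · rintro ⟨k, hk⟩
        have : (0 : ℝ) < 1 / ((k : ℝ) + 1) := by positivity
        linarith
    rw [hI, hmono.measure_iUnion]
    refine iSup_le fun k => ?_
    by_contra hc
    have hk : (0 : ℝ) < 1 / ((k : ℝ) + 1) := by positivity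
    rcases lt_or_ge (R - 1 / ((k : ℝ) + 1)) 0 with hneg | hpos
    · refine hc ?_
      have : {x | q x ≤ R - 1 / ((k : ℝ) + 1)} = ∅ :=
        Set.eq_empty_of_forall_notMem fun x hx => by
          have := hq0 x
          have := hx.out
          linarith
      rw [this, measure_empty]
      exact zero_le
    · have := csInf_le hAb (show R - 1 / ((k : ℝ) + 1) ∈ A from ⟨hpos, (not_le.1 hc).le⟩)
      linarith
  have hcl : closure {x | q x < R} ⊆ {x | q x ≤ R} :=
    closure_lt_subset_le hq continuous_const
  have ho : IsOpen {x | q x < R} := isOpen_Iio.preimage hq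
  refine ⟨closure {x | q x < R}, ⟨_, ho, rfl⟩, ?_, ?_⟩
  · apply le_antisymm
    · exact (measure_mono hcl).trans ((hG R).le.trans hle)
    · exact hge.trans ((hG R).le.trans (measure_mono subset_closure))
  · refine ne_top_of_le_ne_top (hlev R) (measure_mono fun x hx => ?_)
    refine le_antisymm (hcl (isClosed_closure.frontier_subset hx)) (not_lt.1 fun hlt => hx.2 ?_)
    exact interior_maximal subset_closure ho hlt

/-- The covering `T² × ℝ^{n+1} → T³ × ℝ^n` wrapping the first Euclidean coordinate around the
third circle, starting at `t`. -/
def wrap (r1 r2 r3 : ℝ) (n : ℕ) (t : Circ r3) (x : T2R r1 r2 (n + 1)) : T3R r1 r2 r3 n :=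
  WithLp.toLp 2 (x.fst, WithLp.toLp 2 (x.snd.fst, WithLp.toLp 2
    (((x.snd.snd 0 : ℝ) : Circ r3) + t, WithLp.toLp 2 fun j => x.snd.snd j.succ)))

theorem exists_wrap_eq {r1 r2 r3 : ℝ} {n : ℕ} {t : Circ r3} {y : T3R r1 r2 r3 n} {b : ℝ}
    (hb : (b : Circ r3) + t = y.snd.snd.fst) :
    ∃ x : T2R r1 r2 (n + 1), x.snd.snd 0 = b ∧ wrap r1 r2 r3 n t x = y := by
  refine ⟨WithLp.toLp 2 (y.fst, WithLp.toLp 2 (y.snd.fst, WithLp.toLp 2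
    (Fin.cons b (WithLp.ofLp y.snd.snd.snd) : Fin (n + 1) → ℝ))), rfl, ?_⟩
  change WithLp.toLp 2 (y.fst, WithLp.toLp 2 (y.snd.fst, WithLp.toLp 2
    ((b : Circ r3) + t, y.snd.snd.snd))) = y
  rw [hb]
  rfl

theorem isUnrolling_wrap (r1 r2 : ℝ) {r3 : ℝ} (hr3 : 0 < r3) (n : ℕ) (t : Circ r3) :
    IsUnrolling (wrap r1 r2 r3 n t) (fun x => x.snd.snd 0) (2 * Real.pi * r3)
      {p | t3trd p = t} := by
  have hL : 0 < 2 * Real.pi * r3 := by positivity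
  have : Fact (0 < 2 * Real.pi * r3) := ⟨hL⟩
  have htrd : ∀ x : T2R r1 r2 (n + 1),
      t3trd (wrap r1 r2 r3 n t x) = ((x.snd.snd 0 : ℝ) : Circ r3) + t := fun _ => rfl
  have hIco : ∀ {a : ℝ}, 0 ≤ a → a < 2 * Real.pi * r3 →
      a ∈ Set.Ico (0 : ℝ) (0 + 2 * Real.pi * r3) := fun h0 h1 => ⟨h0, by linarith⟩
  refine ⟨hL, by fun_prop, fun x y hxy => ?_, fun x y => ?_, fun x hx => ?_, fun x hx => ?_,
    fun x h0 h1 hx => ?_, fun y hy => ?_, fun x x' h0 h1 h0' h1' hxx => ?_⟩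
  · have hd : dist (((x.snd.snd 0 : ℝ) : Circ r3) + t) (((y.snd.snd 0 : ℝ) : Circ r3) + t)
        = dist (x.snd.snd 0) (y.snd.snd 0) := by
      rw [dist_add_right, dist_eq_norm, ← AddCircle.coe_sub, Real.dist_eq,
        AddCircle.norm_coe_eq_abs_iff _ hL.ne', abs_of_pos hL]
      exact hxy
    rw [edist_dist, edist_dist]
    congr 1
    simp only [wrap, WithLp.prod_dist_eq_of_L2, WithLp.toLp_fst, WithLp.toLp_snd,
      EuclideanSpace.dist_eq, hd, Fin.sum_univ_succ]
    rw [Real.sq_sqrt (by positivity), Real.sq_sqrt (by positivity), Real.sq_sqrt (by positivity),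
      Real.sq_sqrt (by positivity), Real.sq_sqrt (by positivity)]
  · obtain ⟨u, hu, hu'⟩ : (y.snd.snd.fst - t - ((x.snd.snd 0 : ℝ) : Circ r3)) ∈
        ((↑) : ℝ → Circ r3) '' Set.Ioc (-(2 * Real.pi * r3) / 2)
          (-(2 * Real.pi * r3) / 2 + 2 * Real.pi * r3) := by
      rw [AddCircle.coe_image_Ioc_eq]
      trivial
    obtain ⟨x', hx', hxy⟩ := exists_wrap_eq (b := x.snd.snd 0 + u) (t := t) (y := y) (by
      rw [AddCircle.coe_add, hu']
      abel)
    refine ⟨x', hxy, ?_⟩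
    rw [hx', abs_le]
    constructor <;> linarith [hu.1, hu.2]
  · show t3trd _ = t
    rw [htrd, hx, AddCircle.coe_zero, zero_add]
  · show t3trd _ = t
    rw [htrd, hx, AddCircle.coe_period, zero_add]
  · have hx' : ((x.snd.snd 0 : ℝ) : Circ r3) + t = t := hx
    rw [add_eq_right, ← AddCircle.coe_zero,
      AddCircle.coe_eq_coe_iff_of_mem_Ico (hIco h0.le h1) (hIco le_rfl hL)] at hx'
    exact h0.ne' hx'
  · obtain ⟨b, hb, hb'⟩ := AddCircle.eq_coe_Ico (y.snd.snd.fst - t)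
    have hb0 : b ≠ 0 := by
      rintro rfl
      rw [AddCircle.coe_zero] at hb'
      exact hy (sub_eq_zero.1 hb'.symm)
    obtain ⟨x, hx, hxy⟩ := exists_wrap_eq (b := b) (t := t) (y := y) (by
      rw [hb', sub_add_cancel])
    exact ⟨x, hx ▸ hb.1.lt_of_ne hb0.symm, hx ▸ hb.2, hxy⟩
  · have e0 : x.snd.snd 0 = x'.snd.snd 0 := by
      have := congrArg t3trd hxx
      rw [htrd, htrd, _root_.add_left_inj,
        AddCircle.coe_eq_coe_iff_of_mem_Ico (hIco h0.le h1) (hIco h0'.le h1')] at this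
      exact this
    have e1 : x.fst = x'.fst := congrArg (fun p : T3R r1 r2 r3 n => p.fst) hxx
    have e2 : x.snd.fst = x'.snd.fst := congrArg (fun p : T3R r1 r2 r3 n => p.snd.fst) hxx
    have e3 : ∀ j : Fin n, x.snd.snd j.succ = x'.snd.snd j.succ := fun j =>
      congrArg (fun p : T3R r1 r2 r3 n => p.snd.snd.snd j) hxx
    have e4 : x.snd.snd = x'.snd.snd := by
      ext j
      exact Fin.cases e0 e3 j
    exact congrArg (WithLp.toLp 2)
      (Prod.ext e1 (congrArg (WithLp.toLp 2) (Prod.ext e2 e4)))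

theorem hausdorffMeasure_image_Icc_lt_top {X : Type*} [EMetricSpace X] [MeasurableSpace X]
    [BorelSpace X] {k : ℕ} {g : (Fin k → ℝ) → X} {K : ℝ≥0} (hg : LipschitzWith K g)
    (a b : Fin k → ℝ) : μH[(k : ℝ)] (g '' Set.Icc a b) < ⊤ := by
  refine (hg.hausdorffMeasure_image_le (Nat.cast_nonneg k) _).trans_lt ?_
  have h := hausdorffMeasure_pi_real (ι := Fin k)
  rw [Fintype.card_fin] at h
  rw [h]
  refine ENNReal.mul_lt_top ?_ isCompact_Icc.measure_lt_top
  exact ENNReal.rpow_lt_top_of_nonneg (Nat.cast_nonneg k) ENNReal.coe_ne_top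

/-- The parametrization of `T² × ℝ^m` with two angular coordinates. -/
def torusParam (r1 r2 : ℝ) (m : ℕ) (p : ℝ × ℝ × (Fin m → ℝ)) : T2R r1 r2 m :=
  WithLp.toLp 2 ((p.1 : Circ r1), WithLp.toLp 2 ((p.2.1 : Circ r2), WithLp.toLp 2 p.2.2))

theorem lipschitzWith_addCircle_coe (p : ℝ) : LipschitzWith 1 ((↑) : ℝ → AddCircle p) := by
  refine LipschitzWith.of_dist_le_mul fun x y => ?_
  rw [NNReal.coe_one, one_mul, dist_eq_norm, dist_eq_norm, ← AddCircle.coe_sub]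
  exact QuotientAddGroup.norm_mk_le_norm

theorem exists_lipschitzWith_torusParam (r1 r2 : ℝ) (m : ℕ) :
    ∃ K, LipschitzWith K (torusParam r1 r2 m) := by
  have h1 := (lipschitzWith_addCircle_coe (2 * Real.pi * r1)).comp
    (LipschitzWith.prod_fst (α := ℝ) (β := ℝ × (Fin m → ℝ)))
  have h23 := LipschitzWith.prod_snd (α := ℝ) (β := ℝ × (Fin m → ℝ))
  have h2 := ((lipschitzWith_addCircle_coe (2 * Real.pi * r2)).comp
    LipschitzWith.prod_fst).comp h23
  have h3 := ((PiLp.lipschitzWith_toLp 2 (fun _ : Fin m => ℝ)).comp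
    LipschitzWith.prod_snd).comp h23
  have h4 := (WithLp.prod_lipschitzWith_toLp 2 (Circ r2) (EucSp m)).comp (h2.prodMk h3)
  exact ⟨_, (WithLp.prod_lipschitzWith_toLp 2 (Circ r1) (S1R r2 m)).comp (h1.prodMk h4)⟩

theorem exists_angle {r : ℝ} (hr : 0 < r) (a : Circ r) :
    ∃ b ∈ Set.Icc 0 (2 * Real.pi * r), (b : Circ r) = a := by
  have : Fact (0 < 2 * Real.pi * r) := ⟨by positivity⟩
  obtain ⟨b, hb, h⟩ := AddCircle.eq_coe_Ico a
  exact ⟨b, ⟨hb.1, hb.2.le⟩, h⟩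

/-- A piece of `T² × ℝ^m` whose Euclidean coordinates are a Lipschitz image of a `k`-cube has
finite `(k+2)`-dimensional measure. -/
theorem hausdorffMeasure_torus_prod_lt_top {r1 r2 : ℝ} (hr1 : 0 < r1) (hr2 : 0 < r2) {m k : ℕ}
    [MeasurableSpace (T2R r1 r2 m)] [BorelSpace (T2R r1 r2 m)] {w : (Fin k → ℝ) → Fin m → ℝ}
    {K : ℝ≥0} (hw : LipschitzWith K w) (R : ℝ) {A : Set (T2R r1 r2 m)}
    (hA : ∀ x ∈ A, ∃ z, (∀ i, |z i| ≤ R) ∧ w z = WithLp.ofLp x.snd.snd) :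
    μH[((k + 2 : ℕ) : ℝ)] A < ⊤ := by
  obtain ⟨K', hK'⟩ := exists_lipschitzWith_torusParam r1 r2 m
  have htail : LipschitzWith 1 fun z : Fin (k + 2) → ℝ => fun i : Fin k => z i.succ.succ := by
    refine LipschitzWith.of_dist_le_mul fun x y => ?_
    rw [NNReal.coe_one, one_mul, dist_pi_le_iff dist_nonneg]
    exact fun i => dist_le_pi_dist x y _
  have hg := hK'.comp ((LipschitzWith.eval (α := fun _ : Fin (k + 2) => ℝ) 0).prodMk
    ((LipschitzWith.eval (α := fun _ : Fin (k + 2) => ℝ) 1).prodMk (hw.comp htail)))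
  refine (measure_mono ?_).trans_lt (hausdorffMeasure_image_Icc_lt_top hg
    (Fin.cons 0 (Fin.cons 0 fun _ => -R))
    (Fin.cons (2 * Real.pi * r1) (Fin.cons (2 * Real.pi * r2) fun _ => R)))
  intro x hx
  obtain ⟨z, hz, hwz⟩ := hA x hx
  obtain ⟨a, ha, ha'⟩ := exists_angle hr1 x.fst
  obtain ⟨b, hb, hb'⟩ := exists_angle hr2 x.snd.fst
  refine ⟨Fin.cons a (Fin.cons b z), ⟨?_, ?_⟩, ?_⟩
  · exact Fin.cons_le_cons.2 ⟨ha.1, Fin.cons_le_cons.2 ⟨hb.1, fun i => (abs_le.1 (hz i)).1⟩⟩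
  · exact Fin.cons_le_cons.2 ⟨ha.2, Fin.cons_le_cons.2 ⟨hb.2, fun i => (abs_le.1 (hz i)).2⟩⟩
  · show WithLp.toLp 2 ((a : Circ r1), WithLp.toLp 2 ((b : Circ r2), WithLp.toLp 2 (w z))) = x
    rw [ha', hb', hwz]
    rfl

theorem isoProfile_torus_lt_top {r1 r2 : ℝ} (hr1 : 0 < r1) (hr2 : 0 < r2) (n : ℕ) {v : ℝ≥0∞}
    (hv : v ≤ haus (T2R r1 r2 (n + 1)) (n + 3) Set.univ) :
    isoProfile (T2R r1 r2 (n + 1)) (n + 3) v < ⊤ := by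
  let : MeasurableSpace (T2R r1 r2 (n + 1)) := borel _
  have : BorelSpace (T2R r1 r2 (n + 1)) := ⟨rfl⟩
  have hlev : ∀ R : ℝ, μH[((n + 2 : ℕ) : ℝ)]
      {x : T2R r1 r2 (n + 1) | ‖WithLp.ofLp x.snd.snd‖ = R} ≠ ⊤ := by
    intro R
    have hsub : {x : T2R r1 r2 (n + 1) | ‖WithLp.ofLp x.snd.snd‖ = R} ⊆
        ⋃ i : Fin (n + 1), ({x | ‖WithLp.ofLp x.snd.snd‖ = R ∧ x.snd.snd i = R} ∪
          {x | ‖WithLp.ofLp x.snd.snd‖ = R ∧ x.snd.snd i = -R}) := by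
      intro x hx
      obtain ⟨i, hi⟩ := Finite.exists_max fun i => ‖x.snd.snd i‖
      have he : ‖x.snd.snd i‖ = R := by
        rw [← hx.out]
        exact le_antisymm (norm_le_pi_norm (WithLp.ofLp x.snd.snd) i)
          ((pi_norm_le_iff_of_nonneg (norm_nonneg _)).2 hi)
      refine Set.mem_iUnion.2 ⟨i, ?_⟩
      have hR : 0 ≤ R := he ▸ norm_nonneg _
      rcases (abs_eq hR).1 he with h | h
      · exact Or.inl ⟨hx, h⟩
      · exact Or.inr ⟨hx, h⟩
    have hface : ∀ (i : Fin (n + 1)) (s : ℝ), μH[((n + 2 : ℕ) : ℝ)]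
        {x : T2R r1 r2 (n + 1) | ‖WithLp.ofLp x.snd.snd‖ = R ∧ x.snd.snd i = s} < ⊤ := by
      intro i s
      have hw : LipschitzWith 1 fun z : Fin n → ℝ =>
          (i.insertNth s z : Fin (n + 1) → ℝ) := by
        refine LipschitzWith.of_dist_le_mul fun x y => ?_
        rw [NNReal.coe_one, one_mul, dist_pi_le_iff dist_nonneg]
        intro j
        refine Fin.succAboveCases i ?_ (fun j => ?_) j
        · simp
        · simpa using dist_le_pi_dist x y j
      refine hausdorffMeasure_torus_prod_lt_top hr1 hr2 hw R fun x hx => ?_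
      refine ⟨i.removeNth (WithLp.ofLp x.snd.snd), fun j => ?_, ?_⟩
      · exact (norm_le_pi_norm (WithLp.ofLp x.snd.snd) _).trans hx.1.le
      · rw [← hx.2]
        exact Fin.insertNth_self_removeNth i _
    refine ((measure_mono hsub).trans_lt ?_).ne
    refine (measure_iUnion_le _).trans_lt ?_
    rw [tsum_fintype]
    exact ENNReal.sum_lt_top.2 fun i _ => (measure_union_le _ _).trans_lt
      (ENNReal.add_lt_top.2 ⟨hface i R, hface i (-R)⟩)
  have hsub : ∀ R : ℝ, μH[((n + 3 : ℕ) : ℝ)]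
      {x : T2R r1 r2 (n + 1) | ‖WithLp.ofLp x.snd.snd‖ ≤ R} ≠ ⊤ := fun R =>
    (hausdorffMeasure_torus_prod_lt_top (k := n + 1) hr1 hr2 LipschitzWith.id R
      fun x hx => ⟨_, fun j => (norm_le_pi_norm (WithLp.ofLp x.snd.snd) j).trans hx, rfl⟩).ne
  obtain ⟨U, hU, hUv, hUf⟩ := exists_closedRegion_of_level_finite
    (q := fun x : T2R r1 r2 (n + 1) => ‖WithLp.ofLp x.snd.snd‖) (by fun_prop)
    (fun _ => norm_nonneg _) (by push_cast; linarith) hlev hsub hv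
  exact (iInf₂_le U ⟨hU, hUv⟩).trans_lt hUf.lt_top

/-- Lemma 11 of the paper.
Let `0 < r1 ≤ r2 ≤ r3`, `2 ≤ n ≤ 4`, let `c > 0`, and let `Ω` be an isoperimetric
region in `T³ × ℝⁿ` with `0 < η_m < c`.  Then
`I_{S¹_{r1}×S¹_{r2}×ℝ^{n+1}}(V^{n+3}(Ω)) − 2c < V^{n+2}(∂Ω)`
(stated with the subtraction moved to the right-hand side). -/
theorem t3_profile_lower_bound (r1 r2 r3 : ℝ) (hr1 : 0 < r1) (hr12 : r1 ≤ r2)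
    (hr23 : r2 ≤ r3) (n : ℕ) (hn2 : 2 ≤ n) (hn4 : n ≤ 4)
    (c : ℝ) (hc : 0 < c)
    (Ω : Set (T3R r1 r2 r3 n)) (hΩ : IsIsoRegion (T3R r1 r2 r3 n) (n+3) Ω)
    (h1 : 0 < etaMin Ω) (h2 : etaMin Ω < ENNReal.ofReal c) :
    isoProfile (T2R r1 r2 (n+1)) (n+3) (haus (T3R r1 r2 r3 n) (n+3) Ω)
      < haus (T3R r1 r2 r3 n) (n+2) (frontier Ω) + ENNReal.ofReal (2 * c) := by
  have hr2 : 0 < r2 := hr1.trans_le hr12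
  have hr3 : 0 < r3 := hr2.trans_le hr23
  obtain ⟨t, ht⟩ := iInf_lt_iff.1 h2
  let : MeasurableSpace (T2R r1 r2 (n + 1)) := borel _
  have : BorelSpace (T2R r1 r2 (n + 1)) := ⟨rfl⟩
  let : MeasurableSpace (T3R r1 r2 r3 n) := borel _
  have : BorelSpace (T3R r1 r2 r3 n) := ⟨rfl⟩
  obtain ⟨U, hU, hUv, hUf⟩ := (isUnrolling_wrap r1 r2 hr3 n t).exists_closedRegion hΩ.1
    (d := ((n + 2 : ℕ) : ℝ)) (e := ((n + 3 : ℕ) : ℝ)) (Nat.cast_nonneg _)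
    (by push_cast; linarith) (ht.trans ENNReal.ofReal_lt_top).ne
  have hle : isoProfile (T2R r1 r2 (n + 1)) (n + 3) (haus (T3R r1 r2 r3 n) (n + 3) Ω) ≤
      haus (T3R r1 r2 r3 n) (n + 2) (frontier Ω) + 2 * sliceF3 Ω t :=
    (iInf₂_le U ⟨hU, hUv⟩).trans hUf
  rcases eq_or_ne (haus (T3R r1 r2 r3 n) (n + 2) (frontier Ω)) ⊤ with htop | htop
  · rw [htop, top_add]
    exact isoProfile_torus_lt_top hr1 hr2 n (hUv.symm.trans_le (measure_mono (Set.subset_univ U)))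
  · refine hle.trans_lt (ENNReal.add_lt_add_left htop ?_)
    rw [ENNReal.ofReal_mul zero_le_two, ENNReal.ofReal_ofNat]
    exact (ENNReal.mul_lt_mul_iff_right two_ne_zero ENNReal.ofNat_ne_top).2 ht

end
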